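/- Let G act on a set Y such that the action is 3-sharp. Let a ∈ G have order 3 and let y₀ ∈ Y be such that y₀, a • y₀, a² • y₀ are pairwise distinct, and suppose there exists t ∈ G with t • y₀ = y₀, t • (a • y₀) = a² • y₀ and t • (a² • y₀) = a • y₀. Assume: (i) every element of order 3 in G is conjugate to a; (ii) for every triple (x, y, z) of pairwise distinct points of Y there exists g ∈ G with g • x = y, g • y = z and g • z = x; (iii) for every subset S ⊆ Y with exactly 3 elements satisfying a • S = S there exists g ∈ G with g • {y₀, a • y₀, a² • y₀} = S. Then the action of G on Y is sharply 3-transitive. -/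

import Mathlib

open Pointwise

/-- An action is 3-sharp if every element fixing three pairwise distinct points is trivial. -/
def ThreeSharp (G Y : Type*) [Group G] [MulAction G Y] : Prop :=
  ∀ g : G, ∀ x y z : Y, x ≠ y → x ≠ z → y ≠ z →
    g • x = x → g • y = y → g • z = z → g = 1

/-- An action is sharply 3-transitive if any triple of pairwise distinct points is taken
to any other such triple by a unique group element. -/
def SharplyThreeTransitive (G Y : Type*) [Group G] [MulAction G Y] : Prop :=
  ∀ x y z x' y' z' : Y, x ≠ y → x ≠ z → y ≠ z → x' ≠ y' → x' ≠ z' → y' ≠ z' →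
    ∃! g : G, g • x = x' ∧ g • y = y' ∧ g • z = z'

theorem sharplyThreeTransitive_of_connected {G Y : Type*} [Group G] [MulAction G Y]
    (hG : ThreeSharp G Y)
    (a : G) (ha : orderOf a = 3) (y₀ : Y)
    (h₁ : y₀ ≠ a • y₀) (h₂ : y₀ ≠ a ^ 2 • y₀) (h₃ : a • y₀ ≠ a ^ 2 • y₀)
    (t : G) (ht₀ : t • y₀ = y₀) (ht₁ : t • (a • y₀) = a ^ 2 • y₀)
    (ht₂ : t • (a ^ 2 • y₀) = a • y₀)
    (hconj : ∀ g : G, orderOf g = 3 → IsConj a g)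
    (hshift : ∀ x y z : Y, x ≠ y → x ≠ z → y ≠ z →
      ∃ g : G, g • x = y ∧ g • y = z ∧ g • z = x)
    (hconn : ∀ S : Set Y, S.ncard = 3 → a • S = S →
      ∃ g : G, g • ({y₀, a • y₀, a ^ 2 • y₀} : Set Y) = S) :
    SharplyThreeTransitive G Y := by
  have ha3 : a ^ 3 = 1 := by rw [← ha]; exact pow_orderOf_eq_one a
  have hr : a • (a ^ 2 • y₀) = y₀ := by
    rw [smul_smul, ← pow_succ', ha3, one_smul]
  have hq : a • (a • y₀) = a ^ 2 • y₀ := by rw [smul_smul, pow_two]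
  generalize hrr : a ^ 2 • y₀ = r at *
  generalize hqq : a • y₀ = q at *
  have key : ∀ x y z : Y, x ≠ y → x ≠ z → y ≠ z →
      ∃ g : G, g • y₀ = x ∧ g • q = y ∧ g • r = z := by
    intro x y z hxy hxz hyz
    obtain ⟨b, hb1, hb2, hb3⟩ := hshift x y z hxy hxz hyz
    have hb : orderOf b = 3 := by
      have : Fact (Nat.Prime 3) := ⟨Nat.prime_three⟩
      apply orderOf_eq_prime
      · apply hG _ x y z hxy hxz hyz <;>
          simp only [pow_succ, pow_zero, one_mul, mul_smul, hb1, hb2, hb3]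
      · rintro rfl
        exact hxy (by simpa using hb1)
    obtain ⟨c, hc⟩ := isConj_iff.1 (hconj b hb)
    have hac : a = c⁻¹ * b * c := by rw [← hc]; group
    have hbS : b • ({x, y, z} : Set Y) = {x, y, z} := by
      simp only [Set.smul_set_insert, Set.smul_set_singleton, hb1, hb2, hb3]
      ext w; simp only [Set.mem_insert_iff, Set.mem_singleton_iff]; tauto
    obtain ⟨g, hg⟩ := hconn (c⁻¹ • ({x, y, z} : Set Y))
      (by
        simp only [Set.smul_set_insert, Set.smul_set_singleton]
        rw [Set.ncard_eq_three]
        exact ⟨_, _, _, by simpa using hxy, by simpa using hxz, by simpa using hyz, rfl⟩)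
      (by
        rw [hac, smul_smul, mul_assoc, mul_assoc, mul_inv_cancel, mul_one, mul_smul, hbS])
    have hk : (c * g) • ({y₀, q, r} : Set Y) = {x, y, z} := by
      rw [mul_smul, hg, smul_inv_smul]
    generalize c * g = k at hk
    have m : ∀ w ∈ ({y₀, q, r} : Set Y), k • w = x ∨ k • w = y ∨ k • w = z := by
      intro w hw
      have := Set.smul_mem_smul_set (a := k) hw
      rw [hk] at this
      simpa using this
    have n1 : k • y₀ ≠ k • q := by simpa using h₁
    have n2 : k • y₀ ≠ k • r := by simpa using h₂
    have n3 : k • q ≠ k • r := by simpa using h₃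
    rcases m y₀ (by simp) with e1 | e1 | e1 <;> rcases m q (by simp) with e2 | e2 | e2 <;>
      rcases m r (by simp) with e3 | e3 | e3 <;>
      first
      | exact absurd (e1.trans e2.symm) n1
      | exact absurd (e1.trans e3.symm) n2
      | exact absurd (e2.trans e3.symm) n3
      | exact ⟨k, e1, e2, e3⟩
      | (refine ⟨k * t, ?_, ?_, ?_⟩ <;> simp only [mul_smul, hr, hq, hqq, ht₀, ht₁, ht₂, e1, e2, e3]; done)
      | (refine ⟨k * a, ?_, ?_, ?_⟩ <;> simp only [mul_smul, hr, hq, hqq, ht₀, ht₁, ht₂, e1, e2, e3]; done)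
      | (refine ⟨k * (a * a), ?_, ?_, ?_⟩ <;> simp only [mul_smul, hr, hq, hqq, ht₀, ht₁, ht₂, e1, e2, e3]; done)
      | (refine ⟨k * (a * t), ?_, ?_, ?_⟩ <;> simp only [mul_smul, hr, hq, hqq, ht₀, ht₁, ht₂, e1, e2, e3]; done)
      | (refine ⟨k * (t * a), ?_, ?_, ?_⟩ <;> simp only [mul_smul, hr, hq, hqq, ht₀, ht₁, ht₂, e1, e2, e3]; done)
  intro x y z x' y' z' hxy hxz hyz hxy' hxz' hyz'
  obtain ⟨g, rfl, rfl, rfl⟩ := key x y z hxy hxz hyz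
  obtain ⟨g', rfl, rfl, rfl⟩ := key x' y' z' hxy' hxz' hyz'
  refine ⟨g' * g⁻¹, by simp [mul_smul], ?_⟩
  rintro h ⟨e1, e2, e3⟩
  have : g'⁻¹ * h * g = 1 := by
    apply hG _ y₀ q r h₁ h₂ h₃ <;> simp only [mul_smul, e1, e2, e3, inv_smul_smul]
  have h2 : h = g' * (g'⁻¹ * h * g) * g⁻¹ := by group
  rw [h2, this, mul_one]
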